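/- There exist a constant c > 0 and N ∈ ℕ such that for all n ≥ N, R_1(n) ≥ c·(1.3247)^n and R_2(n) ≥ c·(2.102374)^n. -/

import Mathlib

/-!
The bounds come from a family of finite languages with a rigid Horner-like description.
Let `S n` be the set of nonempty languages without the empty word that are denoted by an
expression of length `n` whose top-level operator is not a union. If `F` denotes `L ∈ S n`, then
for each letter `a`

* `aF` has length `n + 1` and denotes `{a} L ∈ S (n + 1)`;
* `a(ε+F)` has length `n + 5` and denotes `{a} (1 + L) ∈ S (n + 5)`.

The language produced determines the letter (its words all start with `a`), which of the two
rules was used (the word `a` belongs to it exactly in the second case), and `L`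
(remove `a`, then possibly the empty word). Hence
`|S (n + 5)| ≥ k |S (n + 4)| + k |S n|` (`card_step`), and `|S n|` grows at least like `r ^ n` for
every `r > 0` with `r ^ 5 ≤ k (r ^ 4 + 1)` (`growth`). Both `k = 1, r = 1.3247` and
`k = 2, r = 2.102374` satisfy this inequality. Since `Rlang k n` is a `Nat.card`, comparing it with
`|S n|` also uses that only finitely many expressions have a given length.
-/

/-- Is the top-level operator a union? -/
def isPlus {α : Type*} : RegularExpression α → Bool
  | RegularExpression.plus _ _ => true
  | _ => false

/-- Is the top-level operator a concatenation? -/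
def isComp {α : Type*} : RegularExpression α → Bool
  | RegularExpression.comp _ _ => true
  | _ => false

/-- Ordinary length: length of the string denoting the expression under the usual
priority rules, with only necessary parentheses. -/
def ord {α : Type*} : RegularExpression α → ℕ
  | RegularExpression.zero => 1
  | RegularExpression.epsilon => 1
  | RegularExpression.char _ => 1
  | RegularExpression.plus F G => ord F + ord G + 1
  | RegularExpression.comp F G =>
      (ord F + if isPlus F then 2 else 0) + (ord G + if isPlus G then 2 else 0)
  | RegularExpression.star F =>
      (ord F + if isPlus F || isComp F then 2 else 0) + 1

/-- `Rlang k n` is the number of distinct languages over a `k`-letter alphabet denoted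
by regular expressions of ordinary length exactly `n`. -/
noncomputable def Rlang (k n : ℕ) : ℕ :=
  Nat.card {L : Language (Fin k) //
    ∃ E : RegularExpression (Fin k), ord E = n ∧ E.matches' = L}

lemma one_le_ord {α : Type*} (E : RegularExpression α) : 1 ≤ ord E := by
  induction E <;> simp only [ord] <;> omega

lemma finite_ord_le (k n : ℕ) : {E : RegularExpression (Fin k) | ord E ≤ n}.Finite := by
  induction n with
  | zero =>
    convert Set.finite_empty
    ext E
    have := one_le_ord E
    simp only [Set.mem_ofPred_eq, Set.mem_empty_iff_false, iff_false]
    omega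
  | succ n ih =>
    refine Set.Finite.subset
      (((((Set.finite_singleton RegularExpression.zero).union
        (Set.finite_singleton RegularExpression.epsilon)).union
        (Set.finite_range RegularExpression.char)).union
        (Set.Finite.image2 RegularExpression.plus ih ih)).union
        ((Set.Finite.image2 RegularExpression.comp ih ih).union
        (ih.image RegularExpression.star))) ?_
    intro E hE
    simp only [Set.mem_ofPred_eq] at hE
    cases E with
    | zero => simp
    | epsilon => simp
    | char a => exact Or.inl (Or.inl (Or.inr ⟨a, rfl⟩))
    | plus F G =>
      have h1 := one_le_ord F
      have h2 := one_le_ord G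
      simp only [ord] at hE
      exact Or.inl (Or.inr ⟨F, by simp only [Set.mem_ofPred_eq]; omega,
        G, by simp only [Set.mem_ofPred_eq]; omega, rfl⟩)
    | comp F G =>
      have h1 := one_le_ord F
      have h2 := one_le_ord G
      simp only [ord] at hE
      exact Or.inr (Or.inl ⟨F, by simp only [Set.mem_ofPred_eq]; omega,
        G, by simp only [Set.mem_ofPred_eq]; omega, rfl⟩)
    | star F =>
      simp only [ord] at hE
      exact Or.inr (Or.inr ⟨F, by simp only [Set.mem_ofPred_eq]; omega, rfl⟩)

lemma finite_langs (k n : ℕ) :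
    {L : Language (Fin k) | ∃ E : RegularExpression (Fin k), ord E = n ∧ E.matches' = L}.Finite := by
  refine ((finite_ord_le k n).image RegularExpression.matches').subset ?_
  rintro L ⟨E, hE, rfl⟩
  exact ⟨E, hE.le, rfl⟩

/-- The nonempty languages without the empty word that are denoted by an expression of ordinary
length `n` which is not a union, so that it needs no parentheses inside a concatenation. -/
def S (k n : ℕ) : Set (Language (Fin k)) :=
  {L | [] ∉ L ∧ (∃ w, w ∈ L) ∧
    ∃ E : RegularExpression (Fin k), isPlus E = false ∧ ord E = n ∧ E.matches' = L}

instance (k n : ℕ) : Finite (S k n) := by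
  refine ((finite_langs k n).subset ?_).to_subtype
  rintro L ⟨-, -, E, -, h⟩
  exact ⟨E, h⟩

lemma card_S_le (k n : ℕ) : Nat.card (S k n) ≤ Rlang k n := by
  have hfin : Finite {L : Language (Fin k) //
    ∃ E : RegularExpression (Fin k), ord E = n ∧ E.matches' = L} := (finite_langs k n).to_subtype
  refine Nat.card_le_card_of_injective
    (fun L : S k n => ⟨L.1, by obtain ⟨L, -, -, E, -, h⟩ := L; exact ⟨E, h⟩⟩) ?_
  intro L M h
  exact Subtype.ext (congrArg (fun X => X.1) h)

lemma cons_mem {α : Type*} (i j : α) (w : List α) (L : Language α) :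
    j :: w ∈ ({[i]} : Language α) * L ↔ j = i ∧ w ∈ L := by
  rw [Language.mem_mul]
  constructor
  · rintro ⟨a, ha, b, hb, h⟩
    obtain rfl : a = [i] := ha
    simp only [List.cons_append, List.nil_append, List.cons.injEq] at h
    obtain ⟨rfl, rfl⟩ := h
    exact ⟨rfl, hb⟩
  · rintro ⟨rfl, h⟩
    exact ⟨[j], rfl, w, h, rfl⟩

lemma nil_not_mem {α : Type*} (i : α) (L : Language α) :
    [] ∉ ({[i]} : Language α) * L := by
  rw [Language.mem_mul]
  rintro ⟨a, ha, b, hb, h⟩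
  obtain rfl : a = [i] := ha
  simp at h

lemma prefix_mem {k n : ℕ} (i : Fin k) {L : Language (Fin k)} (h : L ∈ S k n) :
    {[i]} * L ∈ S k (n + 1) := by
  obtain ⟨-, ⟨w, hw⟩, E, hp, hE, rfl⟩ := h
  refine ⟨nil_not_mem _ _, ⟨i :: w, (cons_mem _ _ _ _).2 ⟨rfl, hw⟩⟩,
    RegularExpression.comp (RegularExpression.char i) E, rfl, ?_, rfl⟩
  have hc : isPlus (RegularExpression.char i) = false := rfl
  simp [ord, hp, hc, hE, add_comm]

lemma prefix_one_add_mem {k n : ℕ} (i : Fin k) {L : Language (Fin k)} (h : L ∈ S k n) :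
    {[i]} * (1 + L) ∈ S k (n + 5) := by
  obtain ⟨-, ⟨w, hw⟩, E, hp, hE, rfl⟩ := h
  refine ⟨nil_not_mem _ _, ⟨i :: w, (cons_mem _ _ _ _).2 ⟨rfl, Or.inr hw⟩⟩,
    RegularExpression.comp (RegularExpression.char i)
      (RegularExpression.plus RegularExpression.epsilon E), rfl, ?_, rfl⟩
  simp only [ord, isPlus, hE]
  simp only [Bool.false_eq_true, if_false, if_true]
  omega

/-- Prefixing a fixed letter is injective, also jointly in the letter for nonempty languages. -/
lemma prefix_inj {α : Type*} {i j : α} {L M : Language α} (hL : ∃ w, w ∈ L)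
    (h : ({[i]} : Language α) * L = {[j]} * M) : i = j ∧ L = M := by
  obtain ⟨w, hw⟩ := hL
  have hij : i = j :=
    ((cons_mem j i w M).1 (h ▸ (cons_mem i i w L).2 ⟨rfl, hw⟩)).1
  subst hij
  refine ⟨rfl, Language.ext fun v => ?_⟩
  have := cons_mem i i v L
  rw [h, cons_mem] at this
  tauto

lemma one_add_inj {α : Type*} {L M : Language α} (hL : [] ∉ L) (hM : [] ∉ M)
    (h : 1 + L = 1 + M) : L = M := by
  refine Language.ext fun v => ?_
  have hv : v ∈ 1 + L ↔ v ∈ 1 + M := by rw [h]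
  rw [Language.mem_add, Language.mem_add, Language.mem_one] at hv
  by_cases h0 : v = []
  · subst h0; tauto
  · tauto

/-- The two rules `F ↦ aF` and `F ↦ a(ε+F)` together form an injection into `S k (n + 5)`. -/
lemma card_step (k n : ℕ) :
    k * (Nat.card (S k (n + 4)) + Nat.card (S k n)) ≤ Nat.card (S k (n + 5)) := by
  have key : Nat.card (Fin k × (S k (n + 4) ⊕ S k n)) ≤ Nat.card (S k (n + 5)) := by
    refine Nat.card_le_card_of_injective (fun p => match p with
      | (i, Sum.inl L) => ⟨{[i]} * L.1, prefix_mem i L.2⟩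
      | (i, Sum.inr L) => ⟨{[i]} * (1 + L.1), prefix_one_add_mem i L.2⟩) ?_
    have hone : ∀ L : Language (Fin k), [] ∈ 1 + L := fun L => Or.inl rfl
    rintro ⟨i, ⟨L, hL⟩ | ⟨L, hL⟩⟩ ⟨j, ⟨M, hM⟩ | ⟨M, hM⟩⟩ h <;>
      simp only [Subtype.mk.injEq] at h
    · obtain ⟨rfl, rfl⟩ := prefix_inj hL.2.1 h
      rfl
    · obtain ⟨rfl, rfl⟩ := prefix_inj hL.2.1 h
      exact absurd (hone M) hL.1
    · obtain ⟨rfl, rfl⟩ := prefix_inj ⟨[], hone L⟩ h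
      exact absurd (hone L) hM.1
    · obtain ⟨rfl, h'⟩ := prefix_inj ⟨[], hone L⟩ h
      obtain rfl := one_add_inj hL.1 hM.1 h'
      rfl
  simpa [Nat.card_prod, Nat.card_sum] using key

lemma card_pos (k n : ℕ) (hk : 0 < k) : 1 ≤ Nat.card (S k (n + 1)) := by
  have hne : (S k (n + 1)).Nonempty := by
    induction n with
    | zero =>
      have hmem : ∀ w, w ∈ (RegularExpression.char (⟨0, hk⟩ : Fin k)).matches' ↔
          w = [⟨0, hk⟩] := fun w => Iff.rfl
      exact ⟨_, fun h => List.cons_ne_nil _ _ ((hmem _).1 h).symm, ⟨_, (hmem _).2 rfl⟩,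
        RegularExpression.char ⟨0, hk⟩, rfl, rfl, rfl⟩
    | succ n ih =>
      obtain ⟨L, hL⟩ := ih
      exact ⟨_, prefix_mem ⟨0, hk⟩ hL⟩
  have := hne.to_subtype
  exact Nat.card_pos

lemma growth (k : ℕ) (hk : 0 < k) (r : ℝ) (hr : 1 ≤ r) (hrk : r ^ 5 ≤ k * (r ^ 4 + 1)) (n : ℕ) :
    1 / r ^ 5 * r ^ (n + 1) ≤ Nat.card (S k (n + 1)) := by
  have hr0 : 0 < r := by linarith
  induction n using Nat.strong_induction_on with
  | _ n ih =>
    by_cases hn : n < 5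
    · have h1 : (1 : ℝ) ≤ Nat.card (S k (n + 1)) := by exact_mod_cast card_pos k n hk
      refine le_trans ?_ h1
      rw [one_div, inv_mul_le_iff₀ (by positivity), mul_one]
      exact pow_le_pow_right₀ hr (by omega)
    · obtain ⟨m, rfl⟩ : ∃ m, n = m + 5 := ⟨n - 5, by omega⟩
      have h4 := ih (m + 4) (by omega)
      have h0 := ih m (by omega)
      have hs : (k : ℝ) * (Nat.card (S k (m + 1 + 4)) + Nat.card (S k (m + 1)))
          ≤ Nat.card (S k (m + 1 + 5)) := by exact_mod_cast card_step k (m + 1)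
      have e4 : m + 1 + 4 = m + 4 + 1 := by omega
      have e5 : m + 1 + 5 = m + 5 + 1 := by omega
      rw [e4, e5] at hs
      calc 1 / r ^ 5 * r ^ (m + 5 + 1) = 1 / r ^ 5 * r ^ (m + 1) * r ^ 5 := by ring
        _ ≤ 1 / r ^ 5 * r ^ (m + 1) * (k * (r ^ 4 + 1)) := by gcongr
        _ = k * (1 / r ^ 5 * r ^ (m + 4 + 1) + 1 / r ^ 5 * r ^ (m + 1)) := by ring
        _ ≤ k * (Nat.card (S k (m + 4 + 1)) + Nat.card (S k (m + 1))) := by gcongr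
        _ ≤ _ := hs

theorem lower_bounds_R1_R2 :
    ∃ c : ℝ, 0 < c ∧ ∃ N : ℕ, ∀ n : ℕ, N ≤ n →
      c * 1.3247 ^ n ≤ (Rlang 1 n : ℝ) ∧ c * 2.102374 ^ n ≤ (Rlang 2 n : ℝ) := by
  -- The constant `1 / 2.102374 ^ 5` is the smaller of the two provided by `growth`.
  refine ⟨1 / 2.102374 ^ 5, by positivity, 1, fun n hn => ?_⟩
  obtain ⟨m, rfl⟩ : ∃ m, n = m + 1 := ⟨n - 1, by omega⟩
  have c1 : (Nat.card (S 1 (m + 1)) : ℝ) ≤ Rlang 1 (m + 1) := by exact_mod_cast card_S_le _ _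
  have c2 : (Nat.card (S 2 (m + 1)) : ℝ) ≤ Rlang 2 (m + 1) := by exact_mod_cast card_S_le _ _
  have g1 := growth 1 one_pos 1.3247 (by norm_num) (by norm_num) m
  have g2 := growth 2 two_pos 2.102374 (by norm_num) (by norm_num) m
  refine ⟨le_trans ?_ (g1.trans c1), g2.trans c2⟩
  gcongr
  norm_num
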